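/- Under the assumptions: F is differentiable, L-smooth and μ-strongly convex; each G_j is convex and c-Lipschitz; H = F + G has the unique minimizer x*; the stepsize is constant α ∈ (0, 2μ/(3L²)); Γ = 2αμ − 3α²L² and δ = 7m²c²α². Then the BlockProx iterates satisfy, for every k ≥ 0: E[H(x^{(k)}) − H(x*)] ≤ ( (L/2)·‖x^{(0)} − x*‖² + 2mc·‖x^{(0)} − x*‖ )·(1 − Γ)^{k/2} + L·δ/(2Γ) + 2mc·√(δ/Γ). -/

import Mathlib

open scoped RealInnerProductSpace

section helpers

variable {E : Type*} [NormedAddCommGroup E] [InnerProductSpace ℝ E] [CompleteSpace E]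

theorem bp_line_deriv (P : E → ℝ) (p x D : E) (t : ℝ) (hP : HasGradientAt P p (x + t • D)) :
    HasDerivAt (fun s : ℝ => P (x + s • D)) ⟪p, D⟫ t := by
  have h1 : HasDerivAt (fun s : ℝ => x + s • D) D t := by
    simpa using ((hasDerivAt_id t).smul_const D).const_add x
  have h2 := hP.hasFDerivAt.comp_hasDerivAt t h1
  exact h2.congr_deriv (by simp)

theorem bp_first_order (P Q : E → ℝ) (p xs : E) (hP : HasGradientAt P p xs)
    (hQ : ConvexOn ℝ Set.univ Q) (hmin : ∀ y, P xs + Q xs ≤ P y + Q y) (x : E) :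
    Q xs - Q x ≤ ⟪p, x - xs⟫ := by
  have hd : HasDerivAt (fun s : ℝ => P (xs + s • (x - xs))) ⟪p, x - xs⟫ 0 :=
    bp_line_deriv P p xs (x - xs) 0 (by simpa using hP)
  have ht := hd.tendsto_slope_zero_right
  refine ge_of_tendsto ht ?_
  have hmem : Set.Ioo (0:ℝ) 1 ∈ nhdsWithin (0:ℝ) (Set.Ioi 0) := Ioo_mem_nhdsGT one_pos
  filter_upwards [hmem] with t ht
  have hc := hQ.2 (Set.mem_univ xs) (Set.mem_univ x) (by linarith [ht.2] : 0 ≤ 1 - t) ht.1.le (by ring)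
  have he : (1 - t) • xs + t • x = xs + t • (x - xs) := by
    rw [smul_sub, sub_smul, one_smul]; abel
  rw [he] at hc
  have hm := hmin (xs + t • (x - xs))
  simp only [smul_eq_mul] at hc
  simp only [zero_add, zero_smul, add_zero, smul_eq_mul]
  rw [inv_mul_eq_div, le_div_iff₀ ht.1]
  nlinarith

theorem bp_descent (F : E → ℝ) (g : E → E) (L : ℝ) (hd : ∀ x, HasGradientAt F (g x) x)
    (hlip : ∀ x y, ‖g x - g y‖ ≤ L * ‖x - y‖) (xs x : E) :
    F x ≤ F xs + ⟪g xs, x - xs⟫ + L / 2 * ‖x - xs‖ ^ 2 := by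
  set D := x - xs with hD
  let φ : ℝ → ℝ := fun t => F (xs + t • D) - t * ⟪g xs, D⟫ - L / 2 * ‖D‖ ^ 2 * t ^ 2
  have hφ : ∀ t, HasDerivAt φ (⟪g (xs + t • D), D⟫ - ⟪g xs, D⟫ - L * ‖D‖ ^ 2 * t) t := by
    intro t
    have h1 := bp_line_deriv F _ xs D t (hd _)
    have h2 := (hasDerivAt_id t).mul_const ⟪g xs, D⟫
    have h3 := ((hasDerivAt_id t).pow 2).const_mul (L / 2 * ‖D‖ ^ 2)
    refine ((h1.sub h2).sub h3).congr_deriv ?_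
    simp only [id, Nat.cast_ofNat]
    ring
  have hanti : AntitoneOn φ (Set.Icc 0 1) := by
    apply antitoneOn_of_deriv_nonpos (convex_Icc 0 1)
    · exact fun t _ => (hφ t).continuousAt.continuousWithinAt
    · exact fun t _ => (hφ t).differentiableAt.differentiableWithinAt
    · intro t ht
      rw [interior_Icc] at ht
      rw [(hφ t).deriv, ← inner_sub_left]
      have h1 := real_inner_le_norm (g (xs + t • D) - g xs) D
      have h2 := hlip (xs + t • D) xs
      rw [add_sub_cancel_left, norm_smul, Real.norm_of_nonneg ht.1.le] at h2
      nlinarith [mul_le_mul_of_nonneg_right h2 (norm_nonneg D)]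
  have := hanti (Set.left_mem_Icc.2 zero_le_one) (Set.right_mem_Icc.2 zero_le_one) zero_le_one
  have e : xs + D = x := by rw [hD]; abel
  simp only [φ, one_smul, zero_smul, add_zero, e] at this
  linarith

theorem bp_prox (Q : E → ℝ) (β : ℝ) (hβ : 0 < β) (z y : E) (hQ : ConvexOn ℝ Set.univ Q)
    (hmin : IsMinOn (fun u => Q u + (1 / (2 * β)) * ‖z - u‖ ^ 2) Set.univ y) (u : E) :
    ‖y - u‖ ^ 2 ≤ ‖z - u‖ ^ 2 - ‖z - y‖ ^ 2 + 2 * β * (Q u - Q y) := by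
  have hg : HasGradientAt (fun u => (1 / (2 * β)) * ‖z - u‖ ^ 2) ((1 / β) • (y - z)) y := by
    rw [hasGradientAt_iff_hasFDerivAt]
    have h1 : HasFDerivAt (fun u => z - u) (-ContinuousLinearMap.id ℝ E) y :=
      (hasFDerivAt_id y).const_sub z
    have h2 := (h1.norm_sq).const_mul (1 / (2 * β))
    refine h2.congr_fderiv ?_
    ext v
    simp
    field_simp
  have h := bp_first_order _ Q _ y hg hQ (fun v => by
    have := isMinOn_iff.1 hmin v (Set.mem_univ v); linarith) u
  rw [real_inner_smul_left] at h
  have h1 : ‖z - u‖ ^ 2 = ‖z - y‖ ^ 2 + 2 * ⟪z - y, y - u⟫ + ‖y - u‖ ^ 2 := by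
    rw [← norm_add_sq_real]; congr 2; abel
  have h2 : ⟪y - z, u - y⟫ = ⟪z - y, y - u⟫ := by
    rw [← neg_sub z y, ← neg_sub y u, inner_neg_neg]
  rw [h2] at h
  have h3 : β * (Q y - Q u) ≤ ⟪z - y, y - u⟫ := by
    have := mul_le_mul_of_nonneg_left h hβ.le
    rwa [← mul_assoc, mul_one_div_cancel hβ.ne', one_mul] at this
  nlinarith

end helpers

theorem bp_sum_coord {n m : ℕ} (hm : 0 < m) (i : Fin n) (f : Fin m → ℝ) :
    ∑ s : Fin n → Fin m, f (s i) = (m : ℝ) ^ n * ((1 / (m : ℝ)) * ∑ j, f j) := by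
  have h := Finset.prod_univ_sum (fun _ : Fin n => (Finset.univ : Finset (Fin m)))
    (fun i' j => if i' = i then f j else (1 : ℝ))
  simp only [Fintype.piFinset_univ, Finset.prod_ite_eq', Finset.mem_univ, if_true] at h
  rw [← h, ← Finset.mul_prod_erase _ _ (Finset.mem_univ i)]
  simp only [if_true]
  rw [Finset.prod_congr rfl (g := fun _ => (m : ℝ))]
  · have hn : 0 < n := i.pos
    obtain ⟨q, rfl⟩ : ∃ q, n = q + 1 := ⟨n - 1, by omega⟩
    have : (m : ℝ) ≠ 0 := by positivity
    simp
    field_simp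
    try ring
  · intro i' hi'
    simp [Finset.ne_of_mem_erase hi']

theorem bp_block_avg {n m d : ℕ} (hm : 0 < m) (y : Fin m → EuclideanSpace ℝ (Fin n × Fin d))
    (u : EuclideanSpace ℝ (Fin n × Fin d))
    (W : (Fin n → Fin m) → EuclideanSpace ℝ (Fin n × Fin d))
    (hW : ∀ s i a, W s (i, a) = y (s i) (i, a)) :
    ∑ s, ‖W s - u‖ ^ 2 = (m : ℝ) ^ n * ((1 / (m : ℝ)) * ∑ j, ‖y j - u‖ ^ 2) := by
  simp only [EuclideanSpace.norm_sq_eq, Fintype.sum_prod_type, PiLp.sub_apply, hW]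
  rw [Finset.sum_comm]
  have : ∀ i : Fin n, ∑ s : Fin n → Fin m, ∑ a : Fin d, ‖y (s i) (i, a) - u (i, a)‖ ^ 2
      = (m : ℝ) ^ n * ((1 / (m : ℝ)) * ∑ j, ∑ a : Fin d, ‖y j (i, a) - u (i, a)‖ ^ 2) :=
    fun i => bp_sum_coord hm i (fun j => ∑ a : Fin d, ‖y j (i, a) - u (i, a)‖ ^ 2)
  simp only [this]
  rw [← Finset.mul_sum, ← Finset.mul_sum]
  congr 2
  rw [Finset.sum_comm]

theorem bp_step {n m d : ℕ} (hm : 0 < m)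
    (c L μ : ℝ) (hc : 0 ≤ c) (hL : 0 < L)
    (F : EuclideanSpace ℝ (Fin n × Fin d) → ℝ)
    (gradF : EuclideanSpace ℝ (Fin n × Fin d) → EuclideanSpace ℝ (Fin n × Fin d))
    (hlip : ∀ x y, ‖gradF x - gradF y‖ ≤ L * ‖x - y‖)
    (hsc : ∀ x y, F x + ⟪gradF x, y - x⟫ + (μ / 2) * ‖y - x‖ ^ 2 ≤ F y)
    (Gj : Fin m → EuclideanSpace ℝ (Fin n × Fin d) → ℝ)
    (hGconv : ∀ j, ConvexOn ℝ Set.univ (Gj j))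
    (hGl : ∀ j x y, Gj j x - Gj j y ≤ c * ‖x - y‖)
    (xs : EuclideanSpace ℝ (Fin n × Fin d))
    (hopt : ∀ x, ∑ j, Gj j xs - ∑ j, Gj j x ≤ ⟪gradF xs, x - xs⟫)
    (hgs : ‖gradF xs‖ ≤ m * c)
    (α : ℝ) (hα : 0 < α)
    (x : EuclideanSpace ℝ (Fin n × Fin d))
    (y : Fin m → EuclideanSpace ℝ (Fin n × Fin d))
    (hy : ∀ j, IsMinOn (fun u => Gj j u + (1 / (2 * ((m : ℝ) * α)))
      * ‖(x - α • gradF x) - u‖ ^ 2) Set.univ (y j)) :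
    (1 / (m : ℝ)) * ∑ j, ‖y j - xs‖ ^ 2
      ≤ (1 - (2 * α * μ - 3 * α ^ 2 * L ^ 2)) * ‖x - xs‖ ^ 2 + 7 * (m : ℝ) ^ 2 * c ^ 2 * α ^ 2 := by
  have hm' : (0 : ℝ) < m := by exact_mod_cast hm
  set z := x - α • gradF x with hz
  set g := gradF x with hg
  have hβ : 0 < (m : ℝ) * α := by positivity
  have hzx : ‖x - z‖ = α * ‖g‖ := by
    rw [hz, sub_sub_cancel, norm_smul, Real.norm_of_nonneg hα.le]
  -- each prox point
  have h1 : ∀ j, ‖y j - xs‖ ^ 2 ≤ ‖z - xs‖ ^ 2 + (m * α) ^ 2 * c ^ 2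
      + 2 * (m * α) * (c * (α * ‖g‖)) + 2 * (m * α) * (Gj j xs - Gj j x) := by
    intro j
    have a1 := bp_prox (Gj j) _ hβ z (y j) (hGconv j) (hy j) xs
    have a2 := hGl j z (y j)
    have a3 := hGl j x z
    rw [hzx] at a3
    have a4 : Gj j x - Gj j (y j) ≤ c * (α * ‖g‖) + c * ‖z - y j‖ := by linarith
    have a5 := mul_le_mul_of_nonneg_left a4 (by positivity : 0 ≤ 2 * ((m : ℝ) * α))
    nlinarith [sq_nonneg (m * α * c - ‖z - y j‖)]
  have h2 : (1 / (m : ℝ)) * ∑ j, ‖y j - xs‖ ^ 2 ≤ ‖z - xs‖ ^ 2 + (m * α) ^ 2 * c ^ 2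
      + 2 * (m * α) * (c * (α * ‖g‖)) + 2 * α * (∑ j, Gj j xs - ∑ j, Gj j x) := by
    have := Finset.sum_le_sum (fun j (_ : j ∈ Finset.univ) => h1 j)
    rw [Finset.sum_add_distrib, ← Finset.mul_sum, Finset.sum_sub_distrib] at this
    simp only [Finset.sum_const, Finset.card_univ, Fintype.card_fin, nsmul_eq_mul] at this
    rw [one_div, inv_mul_le_iff₀ hm']
    refine this.trans (le_of_eq ?_)
    ring
  have h3 : ‖z - xs‖ ^ 2 = ‖x - xs‖ ^ 2 - 2 * α * ⟪g, x - xs⟫ + α ^ 2 * ‖g‖ ^ 2 := by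
    have e : z - xs = (x - xs) - α • g := by rw [hz]; abel
    rw [e, norm_sub_sq_real, inner_smul_right, norm_smul, Real.norm_of_nonneg hα.le,
      real_inner_comm]
    ring
  have h4 := hsc x xs
  rw [← neg_sub x xs, inner_neg_right, norm_neg] at h4
  have h5 := hsc xs x
  have h6 := hopt x
  have h7 : ‖g‖ ≤ L * ‖x - xs‖ + m * c := by
    have b1 := hlip x xs
    have b2 := norm_le_norm_sub_add g (gradF xs)
    linarith
  have h8 : (‖g‖ + m * c) ^ 2 ≤ (L * ‖x - xs‖ + 2 * (m * c)) ^ 2 := by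
    have : 0 ≤ (m : ℝ) * c := by positivity
    have := norm_nonneg g
    apply pow_le_pow_left₀ (by positivity)
    linarith
  have h9 : (L * ‖x - xs‖ + 2 * (m * c)) ^ 2 ≤ 3 * L ^ 2 * ‖x - xs‖ ^ 2 + 7 * (m * c) ^ 2 := by
    nlinarith [sq_nonneg (2 * (L * ‖x - xs‖) - 2 * (m * c)), sq_nonneg (m * c),
      sq_nonneg (L * ‖x - xs‖ - m * c)]
  have h10 := mul_le_mul_of_nonneg_left (h8.trans h9) (sq_nonneg α)
  have h11 : μ * ‖x - xs‖ ^ 2 ≤ ⟪g, x - xs⟫ - (∑ j, Gj j xs - ∑ j, Gj j x) := by linarith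
  have h12 := mul_le_mul_of_nonneg_left h11 (by positivity : 0 ≤ 2 * α)
  rw [h3] at h2
  nlinarith

theorem bp_sum_snoc {n m k : ℕ} (f : (Fin (k + 1) → Fin n → Fin m) → ℝ) :
    ∑ σ, f σ = ∑ σ : Fin k → Fin n → Fin m, ∑ s : Fin n → Fin m,
      f (Fin.snoc (α := fun _ => Fin n → Fin m) σ s) := by
  rw [← (Fin.snocEquiv (fun _ : Fin (k + 1) => Fin n → Fin m)).sum_comp, Fintype.sum_prod_type,
    Finset.sum_comm]
  rfl

/-- **Objective-gap linear convergence of BlockProx to a neighborhood.**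
Under the hypotheses of the linear-rate theorem (`F` differentiable, `L`-smooth,
`μ`-strongly convex; each `G_j` convex and `c`-Lipschitz; `H = F + ∑_j G_j` minimized at
`x*`; constant stepsize `0 < α < 2μ/(3L²)`, `β = mα`), with `Γ = 2αμ − 3α²L²` and
`δ = 7m²c²α²`, for every `k`:
`E[H(x^{(k)}) − H(x*)]
  ≤ ((L/2)‖x⁰ − x*‖² + 2mc‖x⁰ − x*‖)(1 − Γ)^{k/2} + Lδ/(2Γ) + 2mc√(δ/Γ)`,
the expectation being the uniform average over the i.i.d. uniform index configurations. -/
theorem blockprox_objective_linear_convergence_neighborhood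
    (n m d : ℕ) (hn : 0 < n) (hm : 0 < m) (hd : 0 < d)
    (c L μ : ℝ) (hc : 0 ≤ c) (hL : 0 < L) (hμ : 0 < μ)
    (F : EuclideanSpace ℝ (Fin n × Fin d) → ℝ)
    (gradF : EuclideanSpace ℝ (Fin n × Fin d) → EuclideanSpace ℝ (Fin n × Fin d))
    (hdiff : ∀ x, HasGradientAt F (gradF x) x)
    (hlip : ∀ x y, ‖gradF x - gradF y‖ ≤ L * ‖x - y‖)
    (hsc : ∀ x y, F x + ⟪gradF x, y - x⟫ + (μ / 2) * ‖y - x‖ ^ 2 ≤ F y)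
    (Gj : Fin m → EuclideanSpace ℝ (Fin n × Fin d) → ℝ)
    (hGconv : ∀ j, ConvexOn ℝ Set.univ (Gj j))
    (hGlip : ∀ j, LipschitzWith c.toNNReal (Gj j))
    (H : EuclideanSpace ℝ (Fin n × Fin d) → ℝ)
    (hHdef : ∀ x, H x = F x + ∑ j, Gj j x)
    (xstar : EuclideanSpace ℝ (Fin n × Fin d))
    (hxstar : ∀ y, H xstar ≤ H y)
    (α : ℝ) (hα : 0 < α) (hαub : α < 2 * μ / (3 * L ^ 2))
    (Γ δ : ℝ) (hΓ : Γ = 2 * α * μ - 3 * α ^ 2 * L ^ 2)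
    (hδ : δ = 7 * (m : ℝ) ^ 2 * c ^ 2 * α ^ 2)
    (prox : Fin m → ℝ → EuclideanSpace ℝ (Fin n × Fin d) → EuclideanSpace ℝ (Fin n × Fin d))
    (hprox : ∀ (j : Fin m) (β : ℝ) (z : EuclideanSpace ℝ (Fin n × Fin d)), 0 < β →
      IsMinOn (fun u => Gj j u + (1 / (2 * β)) * ‖z - u‖ ^ 2) Set.univ (prox j β z))
    (x0 : EuclideanSpace ℝ (Fin n × Fin d))
    (X : ℕ → (ℕ → Fin n → Fin m) → EuclideanSpace ℝ (Fin n × Fin d))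
    (hX0 : ∀ ω, X 0 ω = x0)
    (hXrec : ∀ t ω (i : Fin n) (a : Fin d),
      X (t + 1) ω (i, a)
        = prox (ω t i) ((m : ℝ) * α) (X t ω - α • gradF (X t ω)) (i, a))
    (k : ℕ) :
    (1 / (m : ℝ) ^ (n * k)) *
        ∑ σ : Fin k → Fin n → Fin m,
          (H (X k (fun t i => if h : t < k then σ ⟨t, h⟩ i else ⟨0, hm⟩)) - H xstar)
      ≤ ((L / 2) * ‖x0 - xstar‖ ^ 2 + 2 * m * c * ‖x0 - xstar‖)
            * (1 - Γ) ^ ((k : ℝ) / 2)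
        + L * δ / (2 * Γ) + 2 * m * c * Real.sqrt (δ / Γ) := by
  have hm' : (0 : ℝ) < m := by exact_mod_cast hm
  have hGl : ∀ j x y, Gj j x - Gj j y ≤ c * ‖x - y‖ := by
    intro j x y
    have h := (hGlip j).dist_le_mul x y
    rw [Real.coe_toNNReal _ hc, Real.dist_eq, dist_eq_norm] at h
    exact (le_abs_self _).trans h
  have hGsum : ConvexOn ℝ Set.univ (fun x => ∑ j, Gj j x) := by
    refine ⟨convex_univ, fun x hx y hy a b ha hb hab => ?_⟩
    simp only [smul_eq_mul]
    rw [Finset.mul_sum, Finset.mul_sum, ← Finset.sum_add_distrib]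
    exact Finset.sum_le_sum fun j _ => (hGconv j).2 hx hy ha hb hab
  have hGsl : ∀ x y, ∑ j, Gj j x - ∑ j, Gj j y ≤ m * c * ‖x - y‖ := by
    intro x y
    rw [← Finset.sum_sub_distrib]
    refine (Finset.sum_le_sum fun j _ => hGl j x y).trans (le_of_eq ?_)
    simp
    ring
  have hopt : ∀ x, ∑ j, Gj j xstar - ∑ j, Gj j x ≤ ⟪gradF xstar, x - xstar⟫ := by
    refine bp_first_order F (fun x => ∑ j, Gj j x) (gradF xstar) xstar (hdiff xstar) hGsum ?_
    intro y
    have := hxstar y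
    rwa [hHdef, hHdef] at this
  have hgs : ‖gradF xstar‖ ≤ m * c := by
    have h1 := hopt (xstar - gradF xstar)
    have h2 := hGsl (xstar - gradF xstar) xstar
    rw [sub_sub_cancel_left, inner_neg_right, real_inner_self_eq_norm_sq] at h1
    rw [sub_sub_cancel_left, norm_neg] at h2
    rcases (norm_nonneg (gradF xstar)).eq_or_lt with h0 | h0
    · rw [← h0]; positivity
    · refine le_of_mul_le_mul_right ?_ h0
      nlinarith
  -- `μ ≤ L`
  have hμL : μ ≤ L := by
    haveI : Nonempty (Fin n × Fin d) := ⟨(⟨0, hn⟩, ⟨0, hd⟩)⟩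
    obtain ⟨v, hv⟩ := exists_ne (0 : EuclideanSpace ℝ (Fin n × Fin d))
    have hv' : 0 < ‖v‖ := norm_pos_iff.2 hv
    have h1 := hsc 0 v
    have h2 := hsc v 0
    have h3 := hlip v 0
    have h4 := real_inner_le_norm (gradF v - gradF 0) v
    rw [inner_sub_left] at h4
    simp only [sub_zero, zero_sub, inner_neg_right, norm_neg] at h1 h2 h3
    have h5 := mul_le_mul_of_nonneg_right h3 hv'.le
    refine le_of_mul_le_mul_right ?_ (pow_pos hv' 2)
    nlinarith
  have hαL : α * (3 * L ^ 2) < 2 * μ := by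
    rwa [lt_div_iff₀ (by positivity)] at hαub
  have hΓ0 : 0 < Γ := by
    rw [hΓ]; nlinarith
  have hΓ1 : 0 < 1 - Γ := by
    have : (α * μ) ^ 2 ≤ (α * L) ^ 2 := by
      apply pow_le_pow_left₀ (by positivity); gcongr
    rw [hΓ]; nlinarith [sq_nonneg (3 * (α * μ) - 1)]
  have hδ0 : 0 ≤ δ := by rw [hδ]; positivity
  -- the iterate depends only on the first indices
  have hloc : ∀ t (ω ω' : ℕ → Fin n → Fin m), (∀ s < t, ω s = ω' s) → X t ω = X t ω' := by
    intro t
    induction t with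
    | zero => intro ω ω' _; rw [hX0, hX0]
    | succ t ih =>
      intro ω ω' h
      have h1 := ih ω ω' (fun s hs => h s (by omega))
      ext ⟨i, a⟩
      rw [hXrec, hXrec, h1, h t (by omega)]
  let ext : (q : ℕ) → (Fin q → Fin n → Fin m) → (ℕ → Fin n → Fin m) :=
    fun q σ t i => if h : t < q then σ ⟨t, h⟩ i else ⟨0, hm⟩
  let S : ℕ → ℝ := fun q => ∑ σ : Fin q → Fin n → Fin m, ‖X q (ext q σ) - xstar‖ ^ 2
  have hcard : ∀ q, ((Finset.univ : Finset (Fin q → Fin n → Fin m)).card : ℝ)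
      = (m : ℝ) ^ (n * q) := by
    intro q
    simp [pow_mul]
  have hS : ∀ q, S (q + 1) ≤ (m : ℝ) ^ n * ((1 - Γ) * S q + (m : ℝ) ^ (n * q) * δ) := by
    intro q
    have e1 : S (q + 1) = ∑ σ : Fin q → Fin n → Fin m, ∑ s : Fin n → Fin m,
        ‖X (q + 1) (ext (q + 1) (Fin.snoc (α := fun _ => Fin n → Fin m) σ s)) - xstar‖ ^ 2 :=
      bp_sum_snoc _
    rw [e1, ← hcard q, Finset.mul_sum, ← nsmul_eq_mul, ← Finset.sum_const,
      ← Finset.sum_add_distrib, Finset.mul_sum]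
    refine Finset.sum_le_sum fun σ _ => ?_
    have hXq : ∀ s, X q (ext (q + 1) (Fin.snoc (α := fun _ => Fin n → Fin m) σ s))
        = X q (ext q σ) := by
      intro s
      apply hloc
      intro t ht
      funext i
      have ht' : t < q + 1 := by omega
      simp only [ext, ht, ht', dif_pos]
      simp [Fin.snoc, ht]
    have hlast : ∀ s, ext (q + 1) (Fin.snoc (α := fun _ => Fin n → Fin m) σ s) q = s := by
      intro s
      funext i
      simp [ext, Fin.snoc]
    rw [bp_block_avg hm (fun j => prox j ((m : ℝ) * α)
      (X q (ext q σ) - α • gradF (X q (ext q σ)))) xstar]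
    · refine mul_le_mul_of_nonneg_left ?_ (by positivity)
      rw [hΓ, hδ]
      exact bp_step hm c L μ hc hL F gradF hlip hsc Gj hGconv hGl xstar hopt hgs α hα _ _
        (fun j => hprox j _ _ (by positivity))
    · intro s i a
      rw [hXrec, hXq, hlast]
  have hSb : ∀ q, S q ≤ (m : ℝ) ^ (n * q) * ((1 - Γ) ^ q * ‖x0 - xstar‖ ^ 2 + δ / Γ) := by
    intro q
    induction q with
    | zero =>
      have : 0 ≤ δ / Γ := by positivity
      simp [S, hX0, this]
    | succ q ih =>
      refine (hS q).trans ?_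
      have h1 := mul_le_mul_of_nonneg_left ih hΓ1.le
      have h2 : (1 - Γ) * (δ / Γ) + δ = δ / Γ := by field_simp; ring
      calc _ ≤ (m : ℝ) ^ n * ((1 - Γ) * ((m : ℝ) ^ (n * q) * ((1 - Γ) ^ q * ‖x0 - xstar‖ ^ 2
                + δ / Γ)) + (m : ℝ) ^ (n * q) * δ) := by gcongr
        _ = (m : ℝ) ^ (n * (q + 1)) * ((1 - Γ) ^ (q + 1) * ‖x0 - xstar‖ ^ 2
              + ((1 - Γ) * (δ / Γ) + δ)) := by ring
        _ = _ := by rw [h2]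
  -- pointwise objective bound
  have hH : ∀ x, H x - H xstar ≤ L / 2 * ‖x - xstar‖ ^ 2 + 2 * m * c * ‖x - xstar‖ := by
    intro x
    have h1 := bp_descent F gradF L hdiff hlip xstar x
    have h2 := hGsl x xstar
    have h3 := real_inner_le_norm (gradF xstar) (x - xstar)
    have h4 := mul_le_mul_of_nonneg_right hgs (norm_nonneg (x - xstar))
    rw [hHdef, hHdef]
    nlinarith
  let N : ℝ := (m : ℝ) ^ (n * k)
  have hN : 0 < N := by positivity
  let T : ℝ := ∑ σ : Fin k → Fin n → Fin m, ‖X k (ext k σ) - xstar‖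
  have hTS : T ^ 2 ≤ N * S k := by
    have := sq_sum_le_card_mul_sum_sq (s := (Finset.univ : Finset (Fin k → Fin n → Fin m)))
      (f := fun σ => ‖X k (ext k σ) - xstar‖)
    rwa [hcard] at this
  let r : ℝ := (1 - Γ) ^ ((k : ℝ) / 2)
  have hr0 : 0 < r := Real.rpow_pos_of_pos hΓ1 _
  have hr1 : r ≤ 1 := Real.rpow_le_one hΓ1.le (by linarith) (by positivity)
  have hr2 : r ^ 2 = (1 - Γ) ^ k := by
    simp only [r]
    rw [← Real.rpow_natCast, ← Real.rpow_mul hΓ1.le, ← Real.rpow_natCast]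
    congr 1
    push_cast
    ring
  set D0 := ‖x0 - xstar‖ with hD0
  have hD0' : 0 ≤ D0 := norm_nonneg _
  have hq : 0 ≤ δ / Γ := by positivity
  have hSk := hSb k
  rw [← hr2] at hSk
  have hT : T ≤ N * (r * D0 + Real.sqrt (δ / Γ)) := by
    have hs := Real.sqrt_nonneg (δ / Γ)
    have hs2 := Real.sq_sqrt hq
    apply le_of_sq_le_sq _ (by positivity)
    calc T ^ 2 ≤ N * S k := hTS
      _ ≤ N * (N * (r ^ 2 * D0 ^ 2 + δ / Γ)) := by gcongr
      _ ≤ (N * (r * D0 + Real.sqrt (δ / Γ))) ^ 2 := by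
        have : 0 ≤ N ^ 2 * (r * D0 * Real.sqrt (δ / Γ)) := by positivity
        rw [← hs2, Real.sqrt_sq hs]
        nlinarith
  have hS' : S k ≤ N * (r * D0 ^ 2 + δ / Γ) := by
    refine hSk.trans ?_
    have : r ^ 2 ≤ r := by nlinarith
    change N * _ ≤ _
    gcongr
  have hfin : ∑ σ : Fin k → Fin n → Fin m, (H (X k (ext k σ)) - H xstar)
      ≤ L / 2 * S k + 2 * m * c * T := by
    simp only [S, T]
    rw [Finset.mul_sum, Finset.mul_sum, ← Finset.sum_add_distrib]
    exact Finset.sum_le_sum fun σ _ => hH _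
  change 1 / N * ∑ σ : Fin k → Fin n → Fin m, (H (X k (ext k σ)) - H xstar) ≤
    (L / 2 * D0 ^ 2 + 2 * m * c * D0) * r + L * δ / (2 * Γ) + 2 * m * c * Real.sqrt (δ / Γ)
  rw [one_div, inv_mul_le_iff₀ hN]
  calc _ ≤ L / 2 * S k + 2 * m * c * T := hfin
    _ ≤ L / 2 * (N * (r * D0 ^ 2 + δ / Γ)) + 2 * m * c * (N * (r * D0 + Real.sqrt (δ / Γ))) := by
      gcongr
    _ = _ := by
      have : L * δ / (2 * Γ) = L / 2 * (δ / Γ) := by field_simp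
      rw [this]
      ring
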